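/- Let A = (a_{ij}) ∈ ℝ^{N×N} be a nonzero skew-symmetric matrix, a := max_{i,j} |a_{ij}|, and t > 0. Let x_{ij}, 1 ≤ i < j ≤ N, be independent standard Gaussian random variables, set x_{ji} := x_{ij}, and let Y_A := (a_{ij} x_{ij}). Then for every r > 0, Pr( |log det(√t I_N + Y_A) − E log det(√t I_N + Y_A)| ≥ N r ) ≤ 2 exp(−t N r² / (2a²)). -/

import Mathlib

/-!
The theorem is Gaussian concentration for the function `ξ ↦ log det (√t I + Y_A(ξ))`, whose
Lipschitz constant is at most `√(N a² / (2 t))`.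

For `M = s I + Y` with `Y` skew-symmetric, the derivative of `log det M` in a skew-symmetric
direction `D` is `tr (M⁻¹ D)`. The Cayley transform `2 s M⁻¹ - I` is orthogonal and `tr D = 0`, so
by Cauchy–Schwarz `tr (M⁻¹ D) = tr ((M⁻¹ - (2 s)⁻¹ I) D)` is at most `√N / (2 |s|)` times the
Frobenius norm of `D`. For `D = Y_A(δ)` this norm is at most `√2 a ‖δ‖`.

For weights `p + q = 1` the Prékopa–Leindler inequality gives Maurey's property (τ) of the standard
Gaussian measure `γ`: if `f(x)ᵖ g(y)^q ≤ C exp (p q |x - y|² / 2)` for all `x` and `y`, then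
`(∫ f dγ)ᵖ (∫ g dγ)^q ≤ C`. Taking `f = exp (c F)` and `g = exp (-(c p / q) F)` with `F` an
`L`-Lipschitz function, Jensen's inequality bounds the second factor from below, and so
`E exp (c (F - E F)) ≤ exp (L² c² / (2 q))`. As `q → 1` this becomes the sharp sub-Gaussian bound,
whose tail estimate has an exponent twice as large as the one required.
-/

open MeasureTheory ProbabilityTheory Matrix

/-- Total weighted `k`-matching of the weighted graph encoded by the
skew-symmetric matrix `A`. -/
noncomputable def phiW {N : ℕ} (A : Matrix (Fin N) (Fin N) ℝ) (k : ℕ) : ℝ :=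
  ∑ M ∈ Finset.univ.filter
      (fun M : Finset (Fin N × Fin N) =>
        ((∀ p ∈ M, p.1 < p.2) ∧
          ∀ p ∈ M, ∀ q ∈ M, p ≠ q →
            p.1 ≠ q.1 ∧ p.1 ≠ q.2 ∧ p.2 ≠ q.1 ∧ p.2 ≠ q.2) ∧ M.card = k),
    ∏ p ∈ M, (A p.1 p.2) ^ 2

/-- The weighted matching polynomial `Φ(t, A)`. -/
noncomputable def PhiW {N : ℕ} (A : Matrix (Fin N) (Fin N) ℝ) (t : ℝ) : ℝ :=
  ∑ k ∈ Finset.range (N / 2 + 1), phiW A k * t ^ (N / 2 - k)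

/-- `Φ(t,A)`, multiplied by `√t` when `N` is odd. -/
noncomputable def PhiFull {N : ℕ} (A : Matrix (Fin N) (Fin N) ℝ) (t : ℝ) : ℝ :=
  (if Even N then 1 else Real.sqrt t) * PhiW A t

/-- Index type of the strictly upper-triangular positions. -/
abbrev PairIdx (N : ℕ) := {p : Fin N × Fin N // p.1 < p.2}

/-- The canonical product of standard Gaussian measures, one for each edge slot. -/
noncomputable def gaussPi (N : ℕ) : Measure (PairIdx N → ℝ) :=
  Measure.pi fun _ => gaussianReal 0 1

/-- The sample `Y_A(ξ)` of the random skew-symmetric matrix `Y_A`. -/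
noncomputable def sampleY {N : ℕ} (A : Matrix (Fin N) (Fin N) ℝ)
    (ξ : PairIdx N → ℝ) : Matrix (Fin N) (Fin N) ℝ :=
  Matrix.of fun i j =>
    if h : i < j then A i j * ξ ⟨(i, j), h⟩
    else if h : j < i then A i j * ξ ⟨(j, i), h⟩
    else 0

/-- `log Φ̃(t, A) = E log det(√t I_N + Y_A)` for i.i.d. standard Gaussian entries. -/
noncomputable def logPhiTilde {N : ℕ} (t : ℝ) (A : Matrix (Fin N) (Fin N) ℝ) : ℝ :=
  ∫ ξ, Real.log ((Real.sqrt t • (1 : Matrix (Fin N) (Fin N) ℝ) + sampleY A ξ).det) ∂(gaussPi N)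

/-- The constant `C₁ = -(1/√(2π)) ∫ log(x²) e^{-x²/2} dx`. -/
noncomputable def C1 : ℝ :=
  -(Real.sqrt (2 * Real.pi))⁻¹ * ∫ x : ℝ, Real.log (x ^ 2) * Real.exp (-x ^ 2 / 2)

section PrekopaLeindler

open scoped ENNReal Pointwise

lemma volume_add_volume_le_volume_add_of_isCompact {K L : Set ℝ} (hK : IsCompact K)
    (hL : IsCompact L) (hK₀ : K.Nonempty) (hL₀ : L.Nonempty) :
    volume K + volume L ≤ volume (K + L) := by
  obtain ⟨u, hu, hu_max⟩ := hK.exists_isGreatest hK₀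
  obtain ⟨v, hv, hv_min⟩ := hL.exists_isLeast hL₀
  -- The translates `v + K` and `u + L` lie on opposite sides of `u + v`.
  have overlap : (v +ᵥ K) ∩ (u +ᵥ L) ⊆ {u + v} := by
    rintro _ ⟨⟨x, hx, rfl⟩, y, hy, hxy⟩
    have := hu_max hx
    have := hv_min hy
    simp only [vadd_eq_add, Set.mem_singleton_iff] at hxy ⊢
    linarith
  calc volume K + volume L = volume (v +ᵥ K) + volume (u +ᵥ L) := by simp only [measure_vadd]
    _ = volume ((v +ᵥ K) ∪ (u +ᵥ L)) :=
      (measure_union₀ (hL.vadd u).measurableSet.nullMeasurableSet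
        (measure_mono_null overlap Real.volume_singleton)).symm
    _ ≤ volume (K + L) := by
      refine measure_mono (Set.union_subset ?_ (Set.vadd_set_subset_add hu))
      rw [add_comm K L]
      exact Set.vadd_set_subset_add hv

lemma volume_add_volume_le_volume_add {A B : Set ℝ} (hA : MeasurableSet A) (hB : MeasurableSet B)
    (hA₀ : A.Nonempty) (hB₀ : B.Nonempty) : volume A + volume B ≤ volume (A + B) := by
  obtain ⟨x, hx⟩ := hA₀
  obtain ⟨y, hy⟩ := hB₀
  rw [hA.measure_eq_iSup_isCompact, hB.measure_eq_iSup_isCompact]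
  simp only [iSup_and']
  refine ENNReal.biSup_add_biSup_le' ⟨∅, by simp⟩ ⟨∅, by simp⟩
    fun K ⟨hKA, hK⟩ L ⟨hLB, hL⟩ => ?_
  have hKA' : insert x K ⊆ A := Set.insert_subset hx hKA
  have hLB' : insert y L ⊆ B := Set.insert_subset hy hLB
  calc volume K + volume L ≤ volume (insert x K) + volume (insert y L) := by
        gcongr <;> exact Set.subset_insert _ _
    _ ≤ volume (insert x K + insert y L) :=
      volume_add_volume_le_volume_add_of_isCompact (hK.insert x) (hL.insert y)
        (Set.insert_nonempty x K) (Set.insert_nonempty y L)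
    _ ≤ volume (A + B) := by gcongr

lemma rpow_mul_rpow_le_ofReal_mul_add {p q : ℝ} (hp : 0 < p) (hq : 0 < q) (hpq : p + q = 1)
    (a b : ℝ≥0∞) : a ^ p * b ^ q ≤ ENNReal.ofReal p * a + ENNReal.ofReal q * b := by
  have conj : p⁻¹.HolderConjugate q⁻¹ := ⟨by simpa using hpq, inv_pos.2 hp, inv_pos.2 hq⟩
  simpa [← ENNReal.rpow_mul, hp, hp.ne', hq, hq.ne', div_eq_mul_inv, ENNReal.ofReal_inv_of_pos,
    mul_comm] using ENNReal.young_inequality (a ^ p) (b ^ q) conj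

lemma lintegral_eq_lintegral_meas_ofReal_lt {α : Type*} [MeasurableSpace α] (μ : Measure α)
    {f : α → ℝ≥0∞} (hf : AEMeasurable f μ) (hf_top : ∀ x, f x ≠ ∞) :
    ∫⁻ x, f x ∂μ = ∫⁻ s in Set.Ioi (0 : ℝ), μ {x | ENNReal.ofReal s < f x} := by
  have h := lintegral_eq_lintegral_meas_lt μ (.of_forall fun x => (f x).toReal_nonneg)
    hf.ennreal_toReal
  simp only [ENNReal.ofReal_toReal (hf_top _)] at h
  rw [h]
  refine setLIntegral_congr_fun measurableSet_Ioi fun s (hs : 0 < s) => ?_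
  simp only [ENNReal.ofReal_lt_iff_lt_toReal hs.le (hf_top _)]

variable {p q : ℝ}

lemma ofReal_mul_volume_lt_add_le (hp : 0 < p) (hq : 0 < q) (hpq : p + q = 1)
    {f g h : ℝ → ℝ≥0∞} (hf : Measurable f) (hg : Measurable g)
    (H : ∀ x y, f x ^ p * g y ^ q ≤ h (p * x + q * y)) {s : ℝ≥0∞}
    (hfs : ∃ x, s < f x) (hgs : ∃ x, s < g x) :
    ENNReal.ofReal p * volume {x | s < f x} + ENNReal.ofReal q * volume {x | s < g x}
      ≤ volume {x | s < h x} := by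
  have scale (c : ℝ) (hc : 0 < c) (A : Set ℝ) :
      ENNReal.ofReal c * volume A = volume (c • A) := by
    simp [Measure.addHaar_smul, abs_of_pos hc]
  have level_subset : p • {x | s < f x} + q • {x | s < g x} ⊆ {x | s < h x} := by
    rintro _ ⟨_, ⟨x, hx, rfl⟩, _, ⟨y, hy, rfl⟩, rfl⟩
    refine lt_of_lt_of_le ?_ (H x y)
    calc s = s ^ p * s ^ q := by
          rw [← ENNReal.rpow_add_of_nonneg _ _ hp.le hq.le, hpq, ENNReal.rpow_one]
      _ < f x ^ p * g y ^ q :=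
        ENNReal.mul_lt_mul (ENNReal.rpow_lt_rpow hx hp) (ENNReal.rpow_lt_rpow hy hq)
  rw [scale p hp, scale q hq]
  exact (volume_add_volume_le_volume_add ((measurableSet_lt measurable_const hf).const_smul₀ p)
    ((measurableSet_lt measurable_const hg).const_smul₀ q) (Set.Nonempty.smul_set hfs)
    (Set.Nonempty.smul_set hgs)).trans (measure_mono level_subset)

/-- Brunn–Minkowski applied to each superlevel set and integrated over the level. -/
lemma ofReal_mul_lintegral_add_le_of_iSup_eq_one (hp : 0 < p) (hq : 0 < q) (hpq : p + q = 1)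
    {f g h : ℝ → ℝ≥0∞} (hf : Measurable f) (hg : Measurable g) (hh : Measurable h)
    (hf_sup : ⨆ x, f x = 1) (hg_sup : ⨆ x, g x = 1)
    (H : ∀ x y, f x ^ p * g y ^ q ≤ h (p * x + q * y)) :
    ENNReal.ofReal p * (∫⁻ x, f x) + ENNReal.ofReal q * ∫⁻ x, g x ≤ ∫⁻ x, h x := by
  have hf_le x : f x ≤ 1 := hf_sup ▸ le_iSup f x
  have hg_le x : g x ≤ 1 := hg_sup ▸ le_iSup g x
  have measurable_level (k : ℝ → ℝ≥0∞) :
      Measurable fun s : ℝ => volume {x | ENNReal.ofReal s < k x} :=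
    Antitone.measurable fun s t hst =>
      measure_mono fun x hx => (ENNReal.ofReal_le_ofReal hst).trans_lt hx
  have layer (k : ℝ → ℝ≥0∞) (hk : Measurable k) (hk_le : ∀ x, k x ≤ 1) :=
    lintegral_eq_lintegral_meas_ofReal_lt volume hk.aemeasurable
      fun x => ((hk_le x).trans_lt ENNReal.one_lt_top).ne
  calc ENNReal.ofReal p * (∫⁻ x, f x) + ENNReal.ofReal q * ∫⁻ x, g x
      = ∫⁻ s in Set.Ioi (0 : ℝ), (ENNReal.ofReal p * volume {x | ENNReal.ofReal s < f x} +
          ENNReal.ofReal q * volume {x | ENNReal.ofReal s < g x}) := by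
        rw [lintegral_add_left ((measurable_level f).const_mul _),
          lintegral_const_mul _ (measurable_level f), lintegral_const_mul _ (measurable_level g),
          layer f hf hf_le, layer g hg hg_le]
    _ ≤ ∫⁻ s in Set.Ioi (0 : ℝ), volume {x | ENNReal.ofReal s < min (h x) 1} := by
        refine setLIntegral_mono (measurable_level _) fun s _ => ?_
        rcases lt_or_ge (ENNReal.ofReal s) 1 with hs | hs
        · simp only [lt_min_iff, hs, and_true]
          exact ofReal_mul_volume_lt_add_le hp hq hpq hf hg H (lt_iSup_iff.1 (hf_sup ▸ hs))
            (lt_iSup_iff.1 (hg_sup ▸ hs))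
        · simp [((hf_le _).trans hs).not_gt, ((hg_le _).trans hs).not_gt]
    _ = ∫⁻ x, min (h x) 1 := (layer _ (hh.min measurable_const) fun _ => min_le_right _ _).symm
    _ ≤ ∫⁻ x, h x := lintegral_mono fun _ => min_le_left _ _

lemma prekopa_leindler_of_iSup_ne_top (hp : 0 < p) (hq : 0 < q) (hpq : p + q = 1)
    {f g h : ℝ → ℝ≥0∞} (hf : Measurable f) (hg : Measurable g) (hh : Measurable h)
    (hf_sup : ⨆ x, f x ≠ ∞) (hg_sup : ⨆ x, g x ≠ ∞)
    (H : ∀ x y, f x ^ p * g y ^ q ≤ h (p * x + q * y)) :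
    (∫⁻ x, f x) ^ p * (∫⁻ x, g x) ^ q ≤ ∫⁻ x, h x := by
  rcases eq_or_ne (⨆ x, f x) 0 with hf₀ | hf₀
  · simp [ENNReal.iSup_eq_zero.1 hf₀, hp]
  rcases eq_or_ne (⨆ x, g x) 0 with hg₀ | hg₀
  · simp [ENNReal.iSup_eq_zero.1 hg₀, hq]
  set F := ⨆ x, f x
  set G := ⨆ x, g x
  have hFp₀ : F ^ p ≠ 0 := (ENNReal.rpow_pos_of_nonneg (pos_iff_ne_zero.2 hf₀) hp.le).ne'
  have hGq₀ : G ^ q ≠ 0 := (ENNReal.rpow_pos_of_nonneg (pos_iff_ne_zero.2 hg₀) hq.le).ne'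
  have hFp_top : F ^ p ≠ ∞ := ENNReal.rpow_ne_top_of_nonneg hp.le hf_sup
  have hGq_top : G ^ q ≠ ∞ := ENNReal.rpow_ne_top_of_nonneg hq.le hg_sup
  have iSup_div_self {k : ℝ → ℝ≥0∞} (h₀ : ⨆ x, k x ≠ 0) (h_top : ⨆ x, k x ≠ ∞) :
      ⨆ x, k x / ⨆ y, k y = 1 := by
    rw [← ENNReal.iSup_div, ENNReal.div_self h₀ h_top]
  have div_mul_div (a b : ℝ≥0∞) :
      (a / F) ^ p * (b / G) ^ q = a ^ p * b ^ q / (F ^ p * G ^ q) := by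
    rw [ENNReal.div_rpow_of_nonneg _ _ hp.le, ENNReal.div_rpow_of_nonneg _ _ hq.le,
      ENNReal.mul_div_mul_comm (.inl hFp₀) (.inl hFp_top)]
  have normalized : (∫⁻ x, f x) ^ p * (∫⁻ x, g x) ^ q / (F ^ p * G ^ q) ≤
      (∫⁻ x, h x) / (F ^ p * G ^ q) := by
    simp only [← div_mul_div, div_eq_mul_inv _ F, div_eq_mul_inv _ G,
      div_eq_mul_inv _ (F ^ p * G ^ q)]
    rw [← lintegral_mul_const _ hf, ← lintegral_mul_const _ hg, ← lintegral_mul_const _ hh]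
    refine (rpow_mul_rpow_le_ofReal_mul_add hp hq hpq _ _).trans
      (ofReal_mul_lintegral_add_le_of_iSup_eq_one hp hq hpq (by fun_prop) (by fun_prop)
        (by fun_prop) (iSup_div_self hf₀ hf_sup) (iSup_div_self hg₀ hg_sup) fun x y => ?_)
    simp only [← div_eq_mul_inv, div_mul_div]
    gcongr
    exact H x y
  have hc₀ : F ^ p * G ^ q ≠ 0 := mul_ne_zero hFp₀ hGq₀
  have hc_top : F ^ p * G ^ q ≠ ∞ := ENNReal.mul_ne_top hFp_top hGq_top
  simpa only [ENNReal.div_mul_cancel hc₀ hc_top] using (ENNReal.div_le_iff hc₀ hc_top).1 normalized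

theorem prekopa_leindler (hp : 0 < p) (hq : 0 < q) (hpq : p + q = 1)
    {f g h : ℝ → ℝ≥0∞} (hf : Measurable f) (hg : Measurable g) (hh : Measurable h)
    (H : ∀ x y, f x ^ p * g y ^ q ≤ h (p * x + q * y)) :
    (∫⁻ x, f x) ^ p * (∫⁻ x, g x) ^ q ≤ ∫⁻ x, h x := by
  have trunc {k : ℝ → ℝ≥0∞} (hk : Measurable k) {r : ℝ} (hr : 0 < r) :
      (∫⁻ x, k x) ^ r = ⨆ n : ℕ, (∫⁻ x, min (k x) n) ^ r := by
    have : ∫⁻ x, k x = ⨆ n : ℕ, ∫⁻ x, min (k x) n := by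
      rw [← lintegral_iSup (fun n => hk.min measurable_const)
        fun m n hmn x => min_le_min le_rfl (Nat.cast_le.2 hmn)]
      simp only [← inf_iSup_eq, ENNReal.iSup_natCast, inf_top_eq]
    rw [this]
    exact (ENNReal.orderIsoRpow r hr).map_iSup _
  have iSup_min_ne_top (k : ℝ → ℝ≥0∞) (n : ℕ) : ⨆ x, min (k x) n ≠ ∞ :=
    ((iSup_le fun _ => min_le_right _ _).trans_lt (ENNReal.natCast_lt_top n)).ne
  rw [trunc hf hp, trunc hg hq]
  simp only [ENNReal.iSup_mul, ENNReal.mul_iSup, iSup_le_iff]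
  intro n m
  refine prekopa_leindler_of_iSup_ne_top hp hq hpq (by fun_prop) (by fun_prop) hh
    (iSup_min_ne_top f m) (iSup_min_ne_top g n) fun x y => le_trans ?_ (H x y)
  gcongr <;> exact min_le_left _ _

end PrekopaLeindler

section PropertyTau

open scoped ENNReal NNReal

/-- Maurey's property (τ) with weights `p` and `q`; `K` is the exponential of the cost function.
The free constant `C` is what makes the property tensorize. -/
def HasPropertyTau {α : Type*} [MeasurableSpace α] (μ : Measure α) (p q : ℝ)
    (K : α → α → ℝ≥0∞) : Prop :=
  ∀ (C : ℝ≥0∞) (f g : α → ℝ≥0∞), Measurable f → Measurable g →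
    (∀ x y, f x ^ p * g y ^ q ≤ C * K x y) →
      (∫⁻ x, f x ∂μ) ^ p * (∫⁻ x, g x ∂μ) ^ q ≤ C

variable {p q : ℝ}

namespace HasPropertyTau

variable {α β : Type*} [MeasurableSpace α] [MeasurableSpace β]

lemma dirac {K : α → α → ℝ≥0∞} {a : α} (hK : K a a ≤ 1) :
    HasPropertyTau (Measure.dirac a) p q K := by
  intro C f g hf hg H
  rw [lintegral_dirac' _ hf, lintegral_dirac' _ hg]
  exact (H a a).trans (mul_le_of_le_one_right' hK)

lemma map {μ : Measure α} {K : β → β → ℝ≥0∞} {φ : α → β} (hφ : Measurable φ)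
    (h : HasPropertyTau μ p q fun x y => K (φ x) (φ y)) : HasPropertyTau (μ.map φ) p q K := by
  intro C f g hf hg H
  rw [lintegral_map hf hφ, lintegral_map hg hφ]
  exact h C _ _ (hf.comp hφ) (hg.comp hφ) fun x y => H (φ x) (φ y)

lemma prod {μ : Measure α} {ν : Measure β} [SFinite ν] {K : α → α → ℝ≥0∞} {L : β → β → ℝ≥0∞}
    (hμ : HasPropertyTau μ p q K) (hν : HasPropertyTau ν p q L) :
    HasPropertyTau (μ.prod ν) p q fun z w => K z.1 w.1 * L z.2 w.2 := by
  intro C f g hf hg H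
  rw [lintegral_prod _ hf.aemeasurable, lintegral_prod _ hg.aemeasurable]
  refine hμ C _ _ hf.lintegral_prod_right' hg.lintegral_prod_right' fun u u' =>
    hν (C * K u u') _ _ (by fun_prop) (by fun_prop) fun v v' => ?_
  simpa only [mul_assoc] using H (u, v) (u', v')

lemma pi_fin : ∀ {n : ℕ} {α : Fin n → Type*} [∀ i, MeasurableSpace (α i)]
    {μ : ∀ i, Measure (α i)} [∀ i, SigmaFinite (μ i)] {K : ∀ i, α i → α i → ℝ≥0∞},
    (∀ i, HasPropertyTau (μ i) p q (K i)) →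
      HasPropertyTau (Measure.pi μ) p q fun x y => ∏ i, K i (x i) (y i)
  | 0, _, _, _, _, _, _ => by
    rw [Measure.pi_of_empty]
    exact dirac (by simp)
  | _ + 1, _, _, μ, _, _, h => by
    rw [← (measurePreserving_piFinSuccAbove μ 0).symm.map_eq]
    refine map (MeasurableEquiv.measurable _) ?_
    simp only [Fin.prod_univ_succ]
    exact (h 0).prod (pi_fin fun i => h i.succ)

lemma pi {ι : Type*} [Fintype ι] {α : ι → Type*} [∀ i, MeasurableSpace (α i)]
    {μ : ∀ i, Measure (α i)} [∀ i, SigmaFinite (μ i)] {K : ∀ i, α i → α i → ℝ≥0∞}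
    (h : ∀ i, HasPropertyTau (μ i) p q (K i)) :
    HasPropertyTau (Measure.pi μ) p q fun x y => ∏ i, K i (x i) (y i) := by
  let σ := (Fintype.equivFin ι).symm
  rw [← (measurePreserving_piCongrLeft μ σ).map_eq]
  refine map (MeasurableEquiv.measurable _) ?_
  simpa only [← σ.prod_comp, MeasurableEquiv.coe_piCongrLeft, Equiv.piCongrLeft_apply_apply] using
    pi_fin fun i => h (σ i)

end HasPropertyTau

lemma gaussianPDFReal_rpow_mul_rpow_mul_exp (hp : 0 ≤ p) (hq : 0 ≤ q) (hpq : p + q = 1)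
    (m : ℝ) (v : ℝ≥0) (x y : ℝ) :
    gaussianPDFReal m v x ^ p * gaussianPDFReal m v y ^ q *
      Real.exp (p * q * (x - y) ^ 2 / (2 * v)) = gaussianPDFReal m v (p * x + q * y) := by
  obtain rfl : q = 1 - p := by linarith
  have hc : 0 ≤ (√(2 * Real.pi * v))⁻¹ := by positivity
  simp only [gaussianPDFReal]
  rw [Real.mul_rpow hc (Real.exp_pos _).le, Real.mul_rpow hc (Real.exp_pos _).le,
    mul_mul_mul_comm, ← Real.rpow_add_of_nonneg hc hp hq, hpq, Real.rpow_one, mul_assoc,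
    ← Real.exp_mul, ← Real.exp_mul, ← Real.exp_add, ← Real.exp_add]
  congr 2
  field_simp
  ring

lemma gaussianPDF_rpow_mul_rpow_mul_ofReal_exp (hp : 0 ≤ p) (hq : 0 ≤ q) (hpq : p + q = 1)
    (m : ℝ) (v : ℝ≥0) (x y : ℝ) :
    gaussianPDF m v x ^ p * gaussianPDF m v y ^ q *
      ENNReal.ofReal (Real.exp (p * q * (x - y) ^ 2 / (2 * v))) =
        gaussianPDF m v (p * x + q * y) := by
  simp only [gaussianPDF]
  rw [ENNReal.ofReal_rpow_of_nonneg (gaussianPDFReal_nonneg m v x) hp,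
    ENNReal.ofReal_rpow_of_nonneg (gaussianPDFReal_nonneg m v y) hq,
    ← ENNReal.ofReal_mul (Real.rpow_nonneg (gaussianPDFReal_nonneg m v x) p),
    ← ENNReal.ofReal_mul' (Real.exp_pos _).le, gaussianPDFReal_rpow_mul_rpow_mul_exp hp hq hpq]

/-- The Prékopa–Leindler inequality for `f φ`, `g φ` and `C φ`, where `φ` is the Gaussian density:
the cost is the defect of log-affinity of `φ`. -/
theorem hasPropertyTau_gaussianReal (hp : 0 < p) (hq : 0 < q) (hpq : p + q = 1) (m : ℝ) {v : ℝ≥0}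
    (hv : v ≠ 0) : HasPropertyTau (gaussianReal m v) p q
      fun x y => ENNReal.ofReal (Real.exp (p * q * (x - y) ^ 2 / (2 * v))) := by
  intro C f g hf hg H
  have density {k : ℝ → ℝ≥0∞} (hk : Measurable k) :
      ∫⁻ x, k x ∂gaussianReal m v = ∫⁻ x, k x * gaussianPDF m v x := by
    rw [gaussianReal_of_var_ne_zero m hv,
      lintegral_withDensity_eq_lintegral_mul _ (measurable_gaussianPDF m v) hk]
    simp only [Pi.mul_apply, mul_comm]
  calc (∫⁻ x, f x ∂gaussianReal m v) ^ p * (∫⁻ x, g x ∂gaussianReal m v) ^ q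
      = (∫⁻ x, f x * gaussianPDF m v x) ^ p * (∫⁻ x, g x * gaussianPDF m v x) ^ q := by
        rw [density hf, density hg]
    _ ≤ ∫⁻ x, C * gaussianPDF m v x := by
        refine prekopa_leindler hp hq hpq (by fun_prop) (by fun_prop) (by fun_prop) fun x y => ?_
        calc (f x * gaussianPDF m v x) ^ p * (g y * gaussianPDF m v y) ^ q
            = f x ^ p * g y ^ q * (gaussianPDF m v x ^ p * gaussianPDF m v y ^ q) := by
              rw [ENNReal.mul_rpow_of_nonneg _ _ hp.le, ENNReal.mul_rpow_of_nonneg _ _ hq.le,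
                mul_mul_mul_comm]
          _ ≤ C * ENNReal.ofReal (Real.exp (p * q * (x - y) ^ 2 / (2 * v))) *
                (gaussianPDF m v x ^ p * gaussianPDF m v y ^ q) :=
              mul_le_mul' (H x y) le_rfl
          _ = C * gaussianPDF m v (p * x + q * y) := by
              rw [← gaussianPDF_rpow_mul_rpow_mul_ofReal_exp hp.le hq.le hpq m v x y,
                mul_assoc, mul_comm (ENNReal.ofReal _)]
    _ = C := by
        rw [lintegral_const_mul _ (measurable_gaussianPDF m v), lintegral_gaussianPDF_eq_one m hv,
          mul_one]

theorem hasPropertyTau_stdGaussian {E : Type*} [NormedAddCommGroup E] [InnerProductSpace ℝ E]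
    [FiniteDimensional ℝ E] [MeasurableSpace E] [BorelSpace E]
    (hp : 0 < p) (hq : 0 < q) (hpq : p + q = 1) : HasPropertyTau (stdGaussian E) p q
      fun x y => ENNReal.ofReal (Real.exp (p * q * dist x y ^ 2 / 2)) := by
  let b := stdOrthonormalBasis ℝ E
  rw [stdGaussian_eq_map_pi_orthonormalBasis b]
  refine .map (by fun_prop) ?_
  have dist_sq (x y : Fin (Module.finrank ℝ E) → ℝ) :
      dist (∑ i, x i • b i) (∑ i, y i • b i) ^ 2 = ∑ i, (x i - y i) ^ 2 := by
    rw [b.sum_repr_symm (WithLp.toLp 2 x), b.sum_repr_symm (WithLp.toLp 2 y),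
      b.repr.symm.dist_map, EuclideanSpace.dist_sq_eq]
    simp [Real.dist_eq]
  simp only [dist_sq, Finset.mul_sum, Finset.sum_div, Real.exp_sum]
  simp only [ENNReal.ofReal_prod_of_nonneg fun _ _ => (Real.exp_pos _).le]
  simpa using HasPropertyTau.pi fun _ : Fin (Module.finrank ℝ E) =>
    hasPropertyTau_gaussianReal hp hq hpq 0 one_ne_zero

end PropertyTau

section Concentration

open scoped ENNReal NNReal Topology

section Lipschitz

variable {α : Type*} [PseudoMetricSpace α] {p q : ℝ} {F : α → ℝ} {L : ℝ≥0}

lemma mul_sub_le_add_dist_sq (hF : LipschitzWith L F) (hq : 0 < q) (c : ℝ) (x y : α) :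
    c * (F x - F y) ≤ L ^ 2 * c ^ 2 / (2 * q) + q * dist x y ^ 2 / 2 := by
  have complete_square : L ^ 2 * c ^ 2 / (2 * q) + q * dist x y ^ 2 / 2 - |c| * (L * dist x y) =
      (L * |c| - q * dist x y) ^ 2 / (2 * q) := by
    rw [← sq_abs c]
    field_simp
    ring
  calc c * (F x - F y) ≤ |c * (F x - F y)| := le_abs_self _
    _ = |c| * dist (F x) (F y) := abs_mul _ _
    _ ≤ |c| * (L * dist x y) := by
        gcongr
        exact hF.dist_le_mul x y
    _ ≤ L ^ 2 * c ^ 2 / (2 * q) + q * dist x y ^ 2 / 2 :=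
      sub_nonneg.1 (complete_square ▸ by positivity)

namespace HasPropertyTau

variable [MeasurableSpace α] [OpensMeasurableSpace α] {μ : Measure α}

lemma lintegral_exp_rpow_mul_le (hp : 0 < p) (hq : 0 < q)
    (h : HasPropertyTau μ p q fun x y => ENNReal.ofReal (Real.exp (p * q * dist x y ^ 2 / 2)))
    (hF : LipschitzWith L F) (c : ℝ) :
    (∫⁻ x, ENNReal.ofReal (Real.exp (c * F x)) ∂μ) ^ p *
      (∫⁻ x, ENNReal.ofReal (Real.exp (-(c * p / q) * F x)) ∂μ) ^ q ≤
        ENNReal.ofReal (Real.exp (p * (L ^ 2 * c ^ 2 / (2 * q)))) := by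
  have hF_meas := hF.continuous.measurable
  refine h _ _ _ (by fun_prop) (by fun_prop) fun x y => ?_
  have exponent_le : c * F x * p + -(c * p / q) * F y * q ≤
      p * (L ^ 2 * c ^ 2 / (2 * q)) + p * q * dist x y ^ 2 / 2 := by
    calc c * F x * p + -(c * p / q) * F y * q = p * (c * (F x - F y)) := by
          field_simp
          ring
      _ ≤ p * (L ^ 2 * c ^ 2 / (2 * q) + q * dist x y ^ 2 / 2) := by
          gcongr
          exact mul_sub_le_add_dist_sq hF hq c x y
      _ = p * (L ^ 2 * c ^ 2 / (2 * q)) + p * q * dist x y ^ 2 / 2 := by ring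
  rw [ENNReal.ofReal_rpow_of_pos (Real.exp_pos _), ENNReal.ofReal_rpow_of_pos (Real.exp_pos _),
    ← ENNReal.ofReal_mul (by positivity), ← ENNReal.ofReal_mul (Real.exp_pos _).le,
    ← Real.exp_mul, ← Real.exp_mul, ← Real.exp_add, ← Real.exp_add]
  exact ENNReal.ofReal_le_ofReal (Real.exp_le_exp.2 exponent_le)

lemma integrable_exp_mul [NeZero μ] (hp : 0 < p) (hq : 0 < q)
    (h : HasPropertyTau μ p q fun x y => ENNReal.ofReal (Real.exp (p * q * dist x y ^ 2 / 2)))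
    (hF : LipschitzWith L F) (c : ℝ) : Integrable (fun x => Real.exp (c * F x)) μ := by
  have hF_meas := hF.continuous.measurable
  have factor_ne_zero : (∫⁻ x, ENNReal.ofReal (Real.exp (-(c * p / q) * F x)) ∂μ) ^ q ≠ 0 := by
    refine (ENNReal.rpow_pos_of_nonneg (pos_iff_ne_zero.2 fun h_zero => ?_) hq.le).ne'
    obtain ⟨x, hx⟩ := ((lintegral_eq_zero_iff (by fun_prop)).1 h_zero).exists
    exact (ENNReal.ofReal_pos.2 (Real.exp_pos _)).ne' hx
  refine ⟨by fun_prop, ?_⟩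
  rw [hasFiniteIntegral_iff_ofReal (.of_forall fun _ => (Real.exp_pos _).le)]
  by_contra h_top
  have bound := h.lintegral_exp_rpow_mul_le hp hq hF c
  rw [not_lt_top_iff.1 h_top, ENNReal.top_rpow_of_pos hp, ENNReal.top_mul factor_ne_zero] at bound
  exact ENNReal.ofReal_ne_top (top_le_iff.1 bound)

lemma integral_exp_rpow_mul_le [NeZero μ] (hp : 0 < p) (hq : 0 < q)
    (h : HasPropertyTau μ p q fun x y => ENNReal.ofReal (Real.exp (p * q * dist x y ^ 2 / 2)))
    (hF : LipschitzWith L F) (c : ℝ) :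
    (∫ x, Real.exp (c * F x) ∂μ) ^ p * (∫ x, Real.exp (-(c * p / q) * F x) ∂μ) ^ q ≤
      Real.exp (p * (L ^ 2 * c ^ 2 / (2 * q))) := by
  have ofReal_integral (b : ℝ) : ∫⁻ x, ENNReal.ofReal (Real.exp (b * F x)) ∂μ =
      ENNReal.ofReal (∫ x, Real.exp (b * F x) ∂μ) :=
    (ofReal_integral_eq_lintegral_ofReal (h.integrable_exp_mul hp hq hF b)
      (.of_forall fun _ => (Real.exp_pos _).le)).symm
  have bound := h.lintegral_exp_rpow_mul_le hp hq hF c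
  rwa [ofReal_integral, ofReal_integral, ENNReal.ofReal_rpow_of_nonneg (by positivity) hp.le,
    ENNReal.ofReal_rpow_of_nonneg (by positivity) hq.le, ← ENNReal.ofReal_mul (by positivity),
    ENNReal.ofReal_le_ofReal_iff (by positivity)] at bound

lemma mgf_sub_integral_le [IsProbabilityMeasure μ] (hp : 0 < p) (hq : 0 < q)
    (h : HasPropertyTau μ p q fun x y => ENNReal.ofReal (Real.exp (p * q * dist x y ^ 2 / 2)))
    (hF : LipschitzWith L F) (c : ℝ) :
    mgf (fun x => F x - ∫ y, F y ∂μ) μ c ≤ Real.exp (L ^ 2 * c ^ 2 / (2 * q)) := by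
  have integrable_exp := h.integrable_exp_mul hp hq hF
  have hF_int : Integrable F μ := by
    refine integrable_of_mem_interior_integrableExpSet ?_
    rw [show integrableExpSet F μ = Set.univ from Set.eq_univ_of_forall integrable_exp,
      interior_univ]
    trivial
  set m := ∫ y, F y ∂μ
  set M := ∫ x, Real.exp (c * F x) ∂μ
  have jensen : Real.exp (-(c * p / q) * m) ≤ ∫ x, Real.exp (-(c * p / q) * F x) ∂μ := by
    rw [← integral_const_mul]
    exact convexOn_exp.map_integral_le Real.continuous_exp.continuousOn isClosed_univ
      (by simp) (hF_int.const_mul _) (integrable_exp _)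
  have mgf_eq : mgf (fun x => F x - m) μ c = M * Real.exp (-(c * m)) := by
    simp only [mgf, sub_eq_add_neg, mul_add, mul_neg, Real.exp_add, integral_mul_const, M]
  rw [← Real.rpow_le_rpow_iff mgf_nonneg (Real.exp_pos _).le hp]
  calc mgf (fun x => F x - m) μ c ^ p = M ^ p * Real.exp (-(c * p / q) * m) ^ q := by
        rw [mgf_eq, Real.mul_rpow (by positivity) (by positivity), ← Real.exp_mul, ← Real.exp_mul]
        congr 2
        field_simp
    _ ≤ M ^ p * (∫ x, Real.exp (-(c * p / q) * F x) ∂μ) ^ q := by gcongr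
    _ ≤ Real.exp (p * (L ^ 2 * c ^ 2 / (2 * q))) := h.integral_exp_rpow_mul_le hp hq hF c
    _ = Real.exp (L ^ 2 * c ^ 2 / (2 * q)) ^ p := by rw [← Real.exp_mul, mul_comm]

end HasPropertyTau

end Lipschitz

variable {E : Type*} [NormedAddCommGroup E] [InnerProductSpace ℝ E] [FiniteDimensional ℝ E]
  [MeasurableSpace E] [BorelSpace E]

theorem hasSubgaussianMGF_stdGaussian_of_lipschitzWith {F : E → ℝ} {L : ℝ≥0}
    (hF : LipschitzWith L F) :
    HasSubgaussianMGF (fun x => F x - ∫ y, F y ∂stdGaussian E) (L ^ 2) (stdGaussian E) where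
  integrable_exp_mul c := by
    have := (hasPropertyTau_stdGaussian (E := E) one_half_pos one_half_pos
      (add_halves 1)).integrable_exp_mul one_half_pos one_half_pos hF c
    simp only [mul_sub, Real.exp_sub]
    exact this.div_const _
  mgf_le c := by
    have bound : ∀ᶠ q in 𝓝[<] (1 : ℝ), mgf (fun x => F x - ∫ y, F y ∂stdGaussian E)
        (stdGaussian E) c ≤ Real.exp (L ^ 2 * c ^ 2 / (2 * q)) := by
      filter_upwards [Ioo_mem_nhdsLT zero_lt_one] with q ⟨hq₀, hq₁⟩
      have hp₀ : 0 < 1 - q := sub_pos.2 hq₁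
      exact (hasPropertyTau_stdGaussian hp₀ hq₀ (sub_add_cancel 1 q)).mgf_sub_integral_le
        hp₀ hq₀ hF c
    have lim : Filter.Tendsto (fun q => Real.exp (L ^ 2 * c ^ 2 / (2 * q))) (𝓝[<] (1 : ℝ))
        (𝓝 (Real.exp (L ^ 2 * c ^ 2 / (2 * 1)))) := by
      refine (ContinuousAt.tendsto ?_).mono_left nhdsWithin_le_nhds
      fun_prop (disch := norm_num)
    simpa using ge_of_tendsto lim bound

lemma hasSubgaussianMGF_pi_gaussianReal_of_lipschitzWith {ι : Type*} [Fintype ι]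
    {F : EuclideanSpace ℝ ι → ℝ} {L : ℝ≥0} (hF : LipschitzWith L F) :
    HasSubgaussianMGF
      (fun ξ : ι → ℝ =>
        F (WithLp.toLp 2 ξ) - ∫ η, F (WithLp.toLp 2 η) ∂Measure.pi fun _ => gaussianReal 0 1)
      (L ^ 2) (Measure.pi fun _ => gaussianReal 0 1) := by
  have toLp_meas : Measurable (WithLp.toLp 2 : (ι → ℝ) → EuclideanSpace ℝ ι) := by fun_prop
  have h := hasSubgaussianMGF_stdGaussian_of_lipschitzWith hF
  rw [← map_pi_eq_stdGaussian, integral_map toLp_meas.aemeasurable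
    hF.continuous.aestronglyMeasurable] at h
  exact h.of_map toLp_meas.aemeasurable

lemma measureReal_le_abs_le_of_hasSubgaussianMGF {Ω : Type*} [MeasurableSpace Ω] {μ : Measure Ω}
    {X : Ω → ℝ} {c : ℝ≥0} (h : HasSubgaussianMGF X c μ) {ε : ℝ} (hε : 0 ≤ ε) :
    μ.real {ω | ε ≤ |X ω|} ≤ 2 * Real.exp (-ε ^ 2 / (2 * c)) := by
  simp only [le_abs, Set.ofPred_or]
  have := measureReal_union_le (μ := μ) {ω | ε ≤ X ω} {ω | ε ≤ -X ω}
  have := h.measure_ge_le hε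
  have := h.neg.measure_ge_le hε
  simp only [Pi.neg_apply] at this
  linarith

end Concentration

section LogDet

section SkewSymmetric

variable {n : Type*} [Fintype n]

lemma trace_eq_zero_of_transpose_eq_neg {R : Type*} [AddCommGroup R] [IsAddTorsionFree R]
    {D : Matrix n n R} (hD : Dᵀ = -D) : D.trace = 0 :=
  self_eq_neg.1 (by rw [← trace_neg, ← hD, trace_transpose])

lemma dotProduct_mulVec_eq_zero_of_transpose_eq_neg {R : Type*} [CommRing R] [IsAddTorsionFree R]
    {Y : Matrix n n R} (hY : Yᵀ = -Y) (v : n → R) : v ⬝ᵥ Y *ᵥ v = 0 :=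
  self_eq_neg.1 <| calc
    v ⬝ᵥ Y *ᵥ v = Yᵀ *ᵥ v ⬝ᵥ v := by rw [dotProduct_mulVec, mulVec_transpose]
    _ = -(v ⬝ᵥ Y *ᵥ v) := by rw [hY, neg_mulVec, neg_dotProduct, dotProduct_comm]

variable [DecidableEq n]

lemma hasDerivAt_det_add_smul {𝕜 : Type*} [NontriviallyNormedField 𝕜] {M : Matrix n n 𝕜}
    (hM : IsUnit M.det) (D : Matrix n n 𝕜) :
    HasDerivAt (fun τ : 𝕜 => (M + τ • D).det) (M.det * (M⁻¹ * D).trace) 0 := by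
  obtain ⟨P, hP⟩ : ∃ P : Polynomial 𝕜, ∀ τ : 𝕜,
      (1 + τ • (M⁻¹ * D)).det = 1 + (M⁻¹ * D).trace * τ + P.eval τ * τ ^ 2 :=
    ⟨_, fun τ => det_one_add_smul τ _⟩
  have det_eq (τ : 𝕜) :
      (M + τ • D).det = M.det * (1 + (M⁻¹ * D).trace * τ + P.eval τ * τ ^ 2) := by
    rw [← hP, ← det_mul, mul_add, mul_one, Matrix.mul_smul,
      mul_nonsing_inv_cancel_left _ _ hM]
  simp only [det_eq]
  simpa using ((((hasDerivAt_id (0 : 𝕜)).const_mul (M⁻¹ * D).trace).const_add 1).add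
    ((P.hasDerivAt 0).mul (hasDerivAt_pow 2 0))).const_mul M.det

variable {K : Type*} [Field K] [LinearOrder K] [IsStrictOrderedRing K]
  {Y : Matrix n n K} {s : K}

lemma det_smul_one_add_ne_zero (hY : Yᵀ = -Y) (hs : s ≠ 0) :
    (s • (1 : Matrix n n K) + Y).det ≠ 0 := by
  intro h
  obtain ⟨v, hv, hMv⟩ := exists_mulVec_eq_zero_iff.2 h
  have smul_norm_sq : s * (v ⬝ᵥ v) = 0 := by
    simpa [add_mulVec, smul_mulVec, dotProduct_mulVec_eq_zero_of_transpose_eq_neg hY] using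
      congrArg (v ⬝ᵥ ·) hMv
  exact hv (dotProduct_self_eq_zero.1 ((mul_eq_zero.1 smul_norm_sq).resolve_left hs))

/-- `2 * s * (s + Y)⁻¹ - 1` is the Cayley transform `(s - Y) * (s + Y)⁻¹` of `Y`. -/
lemma inv_sub_smul_one_mul_transpose (hY : Yᵀ = -Y) (hs : s ≠ 0) :
    ((s • 1 + Y)⁻¹ - (2 * s)⁻¹ • 1) * ((s • 1 + Y)⁻¹ - (2 * s)⁻¹ • 1)ᵀ =
      (2 * s)⁻¹ ^ 2 • (1 : Matrix n n K) := by
  set M := s • (1 : Matrix n n K) + Y with hM_def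
  have hM : IsUnit M.det := (det_smul_one_add_ne_zero hY hs).isUnit
  have add_transpose : M + Mᵀ = (2 * s) • (1 : Matrix n n K) := by
    rw [hM_def, transpose_add, hY, transpose_smul, transpose_one]
    module
  have inv_add_inv_transpose : M⁻¹ + M⁻¹ᵀ = (2 * s) • (M⁻¹ * M⁻¹ᵀ) := calc
    M⁻¹ + M⁻¹ᵀ = M⁻¹ * (M + Mᵀ) * M⁻¹ᵀ := by
      rw [mul_add, add_mul, nonsing_inv_mul M hM, one_mul, mul_assoc, ← transpose_mul,
        nonsing_inv_mul M hM, transpose_one, mul_one, add_comm]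
    _ = (2 * s) • (M⁻¹ * M⁻¹ᵀ) := by simp [add_transpose]
  calc (M⁻¹ - (2 * s)⁻¹ • 1) * (M⁻¹ - (2 * s)⁻¹ • 1)ᵀ
      = M⁻¹ * M⁻¹ᵀ - (2 * s)⁻¹ • (M⁻¹ + M⁻¹ᵀ) + (2 * s)⁻¹ ^ 2 • 1 := by
        simp only [transpose_sub, transpose_smul, transpose_one, sub_mul, mul_sub, smul_mul,
          Matrix.mul_smul, one_mul, mul_one]
        module
    _ = (2 * s)⁻¹ ^ 2 • 1 := by
      rw [inv_add_inv_transpose, inv_smul_smul₀ (by positivity), sub_self, zero_add]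

end SkewSymmetric

section Frobenius

open scoped Matrix.Norms.Frobenius

variable {m n : Type*} [Fintype m] [Fintype n]

lemma frobenius_norm_sq_eq_sum (B : Matrix m n ℝ) : ‖B‖ ^ 2 = ∑ i, ∑ j, B i j ^ 2 := by
  rw [frobenius_norm_def, ← Real.sqrt_eq_rpow, Real.sq_sqrt (by positivity)]
  simp

lemma frobenius_norm_sq_eq_trace (B : Matrix m n ℝ) : ‖B‖ ^ 2 = (B * Bᵀ).trace := by
  simp [← pow_two, frobenius_norm_sq_eq_sum, trace, mul_apply]

lemma abs_trace_mul_le_frobenius_norm_mul (B : Matrix m n ℝ) (D : Matrix n m ℝ) :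
    |(B * D).trace| ≤ ‖B‖ * ‖D‖ := by
  refine abs_le_of_sq_le_sq ?_ (by positivity)
  rw [mul_pow, frobenius_norm_sq_eq_sum, frobenius_norm_sq_eq_sum,
    Finset.sum_comm (s := .univ (α := n))]
  simpa [trace, mul_apply, ← Fintype.sum_prod_type'] using
    Finset.sum_mul_sq_le_sq_mul_sq Finset.univ (fun p : m × n => B p.1 p.2) (fun p => D p.2 p.1)

variable [DecidableEq n] {Y Z D : Matrix n n ℝ} {s : ℝ}

lemma frobenius_norm_inv_sub_smul_one (hY : Yᵀ = -Y) (hs : s ≠ 0) :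
    ‖(s • 1 + Y)⁻¹ - (2 * s)⁻¹ • (1 : Matrix n n ℝ)‖ = √(Fintype.card n) / (2 * |s|) := by
  rw [← sq_eq_sq₀ (by positivity) (by positivity), frobenius_norm_sq_eq_trace,
    inv_sub_smul_one_mul_transpose hY hs, div_pow, Real.sq_sqrt (by positivity), mul_pow, sq_abs]
  simp
  field_simp

lemma abs_trace_inv_mul_le (hY : Yᵀ = -Y) (hD : Dᵀ = -D) (hs : s ≠ 0) :
    |((s • 1 + Y)⁻¹ * D).trace| ≤ √(Fintype.card n) / (2 * |s|) * ‖D‖ := by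
  have trace_eq : ((s • 1 + Y)⁻¹ * D).trace =
      (((s • 1 + Y)⁻¹ - (2 * s)⁻¹ • (1 : Matrix n n ℝ)) * D).trace := by
    simp [sub_mul, trace_eq_zero_of_transpose_eq_neg hD]
  rw [trace_eq, ← frobenius_norm_inv_sub_smul_one hY hs]
  exact abs_trace_mul_le_frobenius_norm_mul _ _

lemma hasDerivAt_log_det_smul_one_add (hY : Yᵀ = -Y) (hD : Dᵀ = -D) (hs : s ≠ 0) (τ : ℝ) :
    HasDerivAt (fun τ : ℝ => Real.log (s • 1 + (Y + τ • D)).det)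
      ((s • 1 + (Y + τ • D))⁻¹ * D).trace τ := by
  have det_ne_zero : (s • 1 + (Y + τ • D)).det ≠ 0 :=
    det_smul_one_add_ne_zero (by simp [hY, hD, add_comm]) hs
  have deriv_det := (hasDerivAt_det_add_smul det_ne_zero.isUnit D)
  rw [← sub_self τ] at deriv_det
  convert (deriv_det.comp_sub_const τ τ).log (by simpa using det_ne_zero) using 1
  · ext σ
    congr 2
    module
  · simp [det_ne_zero]

theorem abs_log_det_smul_one_add_sub_le (hY : Yᵀ = -Y) (hZ : Zᵀ = -Z) (hs : s ≠ 0) :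
    |Real.log (s • 1 + Y).det - Real.log (s • 1 + Z).det| ≤
      √(Fintype.card n) / (2 * |s|) * ‖Y - Z‖ := by
  have hD : (Y - Z)ᵀ = -(Y - Z) := by
    rw [transpose_sub, hY, hZ]
    module
  have hW (τ : ℝ) : (Z + τ • (Y - Z))ᵀ = -(Z + τ • (Y - Z)) := by
    rw [transpose_add, transpose_smul, hZ, hD]
    module
  have mean_value := norm_image_sub_le_of_norm_deriv_le_segment_01'
    (fun τ _ => (hasDerivAt_log_det_smul_one_add hZ hD hs τ).hasDerivWithinAt)
    fun τ _ => abs_trace_inv_mul_le (hW τ) hD hs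
  simpa using mean_value

end Frobenius

end LogDet

section Sample

lemma sum_sum_eq_sum_lt {α M : Type*} [Fintype α] [LinearOrder α] [AddCommMonoid M]
    {f : α → α → M} (hf : ∀ i, f i i = 0) :
    ∑ i, ∑ j, f i j = ∑ p : {p : α × α // p.1 < p.2}, (f p.1.1 p.1.2 + f p.1.2 p.1.1) := by
  have split (i j : α) :
      f i j = (if i < j then f i j else 0) + (if j < i then f i j else 0) := by
    rcases lt_trichotomy i j with hij | rfl | hij
    · simp [hij, hij.not_gt]
    · simp [hf]
    · simp [hij, hij.not_gt]
  calc ∑ i, ∑ j, f i j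
      = ∑ i, ∑ j, (if i < j then f i j else 0) + ∑ i, ∑ j, (if j < i then f i j else 0) := by
        simp only [← Finset.sum_add_distrib, ← split]
    _ = ∑ p : α × α, if p.1 < p.2 then f p.1 p.2 + f p.2 p.1 else 0 := by
        rw [Finset.sum_comm (f := fun i j => if j < i then f i j else 0),
          Fintype.sum_prod_type]
        simp only [← Finset.sum_add_distrib, ite_add_zero]
    _ = ∑ p : {p : α × α // p.1 < p.2}, (f p.1.1 p.1.2 + f p.1.2 p.1.1) := by
        rw [← Finset.sum_filter]
        exact Finset.sum_subtype _ (by simp) _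

variable {N : ℕ} (A : Matrix (Fin N) (Fin N) ℝ)

lemma sampleY_apply_of_lt (ξ : PairIdx N → ℝ) {i j : Fin N} (h : i < j) :
    sampleY A ξ i j = A i j * ξ ⟨(i, j), h⟩ := by
  simp [sampleY, h]

lemma sampleY_apply_of_gt (ξ : PairIdx N → ℝ) {i j : Fin N} (h : j < i) :
    sampleY A ξ i j = A i j * ξ ⟨(j, i), h⟩ := by
  simp [sampleY, h, h.not_gt]

lemma sampleY_apply_self (ξ : PairIdx N → ℝ) (i : Fin N) : sampleY A ξ i i = 0 := by
  simp [sampleY]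

lemma sampleY_sub (ξ η : PairIdx N → ℝ) : sampleY A (ξ - η) = sampleY A ξ - sampleY A η := by
  ext i j
  rcases lt_trichotomy i j with hij | rfl | hij
  · simp [sampleY_apply_of_lt A _ hij, mul_sub]
  · simp [sampleY_apply_self]
  · simp [sampleY_apply_of_gt A _ hij, mul_sub]

variable {A}

lemma transpose_sampleY (hA : Aᵀ = -A) (ξ : PairIdx N → ℝ) : (sampleY A ξ)ᵀ = -sampleY A ξ := by
  ext i j
  have hA_apply : A j i = -A i j := congrFun₂ hA i j
  rcases lt_trichotomy i j with hij | rfl | hij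
  · simp [sampleY_apply_of_lt A ξ hij, sampleY_apply_of_gt A ξ hij, hA_apply]
  · simp [sampleY_apply_self]
  · simp [sampleY_apply_of_lt A ξ hij, sampleY_apply_of_gt A ξ hij, hA_apply]

open scoped Matrix.Norms.Frobenius in
lemma frobenius_norm_sampleY_sq_le {a : ℝ} (ha : ∀ i j, |A i j| ≤ a) (ξ : PairIdx N → ℝ) :
    ‖sampleY A ξ‖ ^ 2 ≤ 2 * a ^ 2 * ∑ p, ξ p ^ 2 := by
  have sq_le (i j : Fin N) : A i j ^ 2 ≤ a ^ 2 := sq_le_sq.2 ((ha i j).trans (le_abs_self a))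
  calc ‖sampleY A ξ‖ ^ 2 = ∑ i, ∑ j, sampleY A ξ i j ^ 2 := frobenius_norm_sq_eq_sum _
    _ = ∑ p : PairIdx N, (sampleY A ξ p.1.1 p.1.2 ^ 2 + sampleY A ξ p.1.2 p.1.1 ^ 2) :=
      sum_sum_eq_sum_lt fun i => by simp [sampleY_apply_self]
    _ = ∑ p : PairIdx N, (A p.1.1 p.1.2 ^ 2 + A p.1.2 p.1.1 ^ 2) * ξ p ^ 2 :=
      Finset.sum_congr rfl fun p _ => by
        rw [sampleY_apply_of_lt A ξ p.2, sampleY_apply_of_gt A ξ p.2, mul_pow, mul_pow, add_mul]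
    _ ≤ ∑ p : PairIdx N, (a ^ 2 + a ^ 2) * ξ p ^ 2 :=
      Finset.sum_le_sum fun _ _ =>
        mul_le_mul_of_nonneg_right (add_le_add (sq_le _ _) (sq_le _ _)) (sq_nonneg _)
    _ = 2 * a ^ 2 * ∑ p, ξ p ^ 2 := by rw [← Finset.mul_sum, two_mul]

open scoped Matrix.Norms.Frobenius in
lemma lipschitzWith_log_det_sampleY (hA : Aᵀ = -A) {a : ℝ} (ha : ∀ i j, |A i j| ≤ a) {t : ℝ}
    (ht : 0 < t) :
    LipschitzWith (√(N * a ^ 2 / (2 * t))).toNNReal fun ξ : EuclideanSpace ℝ (PairIdx N) =>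
      Real.log (√t • (1 : Matrix (Fin N) (Fin N) ℝ) + sampleY A ξ.ofLp).det := by
  refine .of_dist_le' fun ξ η => ?_
  have log_det_le := abs_log_det_smul_one_add_sub_le (transpose_sampleY hA ξ.ofLp)
    (transpose_sampleY hA η.ofLp) (Real.sqrt_pos.2 ht).ne'
  rw [← sampleY_sub, Fintype.card_fin, abs_of_pos (Real.sqrt_pos.2 ht)] at log_det_le
  refine log_det_le.trans (le_of_sq_le_sq ?_ (by positivity))
  calc (√N / (2 * √t) * ‖sampleY A (ξ.ofLp - η.ofLp)‖) ^ 2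
      = N / (4 * t) * ‖sampleY A (ξ.ofLp - η.ofLp)‖ ^ 2 := by
        rw [mul_pow, div_pow, mul_pow, Real.sq_sqrt (by positivity), Real.sq_sqrt ht.le]
        norm_num
    _ ≤ N / (4 * t) * (2 * a ^ 2 * ∑ p, (ξ.ofLp - η.ofLp) p ^ 2) := by
        gcongr
        exact frobenius_norm_sampleY_sq_le ha _
    _ = (√(N * a ^ 2 / (2 * t)) * dist ξ η) ^ 2 := by
        rw [mul_pow, Real.sq_sqrt (by positivity), EuclideanSpace.dist_sq_eq]
        simp only [Real.dist_eq, sq_abs, Pi.sub_apply]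
        ring

lemma hasSubgaussianMGF_log_det_sampleY (hA : Aᵀ = -A) {a : ℝ} (ha : ∀ i j, |A i j| ≤ a) {t : ℝ}
    (ht : 0 < t) :
    HasSubgaussianMGF
      (fun ξ => Real.log (√t • (1 : Matrix (Fin N) (Fin N) ℝ) + sampleY A ξ).det -
        logPhiTilde t A)
      (N * a ^ 2 / (2 * t)).toNNReal (gaussPi N) := by
  have h := hasSubgaussianMGF_pi_gaussianReal_of_lipschitzWith
    (lipschitzWith_log_det_sampleY hA ha ht)
  rwa [← Real.toNNReal_pow (Real.sqrt_nonneg _), Real.sq_sqrt (by positivity)] at h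

end Sample

theorem concentration_log_det_general {N : ℕ} {A : Matrix (Fin N) (Fin N) ℝ} (hA : Aᵀ = -A)
    (hA0 : A ≠ 0) {a : ℝ} (ha : ∀ i j, |A i j| ≤ a) {t : ℝ} (ht : 0 < t) {r : ℝ} (hr : 0 < r) :
    gaussPi N {ξ | (N : ℝ) * r ≤
        |Real.log ((Real.sqrt t • (1 : Matrix (Fin N) (Fin N) ℝ) + sampleY A ξ).det) -
          logPhiTilde t A|} ≤
      ENNReal.ofReal (2 * Real.exp (-(t * N * r ^ 2) / a ^ 2)) := by
  obtain ⟨i, j, hij⟩ : ∃ i j, A i j ≠ 0 := by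
    by_contra! h
    exact hA0 (Matrix.ext h)
  have ha0 : 0 < a := (abs_pos.2 hij).trans_le (ha i j)
  have hN : 0 < (N : ℝ) := by exact_mod_cast i.pos
  have : IsProbabilityMeasure (gaussPi N) := by unfold gaussPi; infer_instance
  rw [← ofReal_measureReal]
  refine ENNReal.ofReal_le_ofReal ((measureReal_le_abs_le_of_hasSubgaussianMGF
    (hasSubgaussianMGF_log_det_sampleY hA ha ht) (by positivity)).trans_eq ?_)
  rw [Real.coe_toNNReal _ (by positivity)]
  congr 2
  field_simp

/-- concentration of `log det(√t I_N + Y_A)` for Gaussian entries: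
`Pr(|log det(√t I + Y_A) - E log det(√t I + Y_A)| ≥ Nr) ≤ 2 exp(-tNr²/(2a²))`. -/
theorem concentration_log_det
    {N : ℕ} (A : Matrix (Fin N) (Fin N) ℝ) (hA : Aᵀ = -A) (hA0 : A ≠ 0)
    (a : ℝ) (ha : ∀ i j, |A i j| ≤ a) (ha' : ∃ i j, |A i j| = a)
    (t : ℝ) (ht : 0 < t) (r : ℝ) (hr : 0 < r) :
    gaussPi N {ξ | (N : ℝ) * r ≤
        |Real.log ((Real.sqrt t • (1 : Matrix (Fin N) (Fin N) ℝ) + sampleY A ξ).det) -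
          logPhiTilde t A|} ≤
      ENNReal.ofReal (2 * Real.exp (-(t * N * r ^ 2) / (2 * a ^ 2))) := by
  refine (concentration_log_det_general hA hA0 ha ht hr).trans (ENNReal.ofReal_le_ofReal ?_)
  have : 0 ≤ t * N * r ^ 2 / a ^ 2 := by positivity
  gcongr 2 * Real.exp ?_
  rw [mul_comm 2, ← div_div, neg_div]
  linarith
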